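/- Let C ⊆ F_{q^m}^n be an arbitrary (not necessarily linear) code with at least two elements and let ρ be a nonnegative integer with ρ < d_R(C). (i) For all F_q-subspaces L, L' ⊆ F_q^n with dim_{F_q} L ≥ n − ρ and F_q^n = L' ⊕ L^⊥, letting π : F_{q^m}^n → F_{q^m}^n be the F_{q^m}-linear projection with image V_{L'} and kernel V_{L^⊥}, one has wt_R(π(c_1) − π(c_2)) ≥ d_R(C) − ρ for all distinct c_1, c_2 ∈ C. (ii) Moreover, there exist F_q-subspaces L, L' ⊆ F_q^n with dim_{F_q} L = n − ρ and F_q^n = L' ⊕ L^⊥ such that, for the corresponding projection π, min{ wt_R(π(c_1) − π(c_2)) : c_1, c_2 ∈ C, c_1 ≠ c_2 } = d_R(C) − ρ. -/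

import Mathlib

open Submodule Module

namespace RankPaper

variable {n : ℕ}

/-- The coordinatewise `q^i`-th power map on `Fqm^n`. -/
def qpowMap (q i : ℕ) {Fqm : Type} [Field Fqm] (v : Fin n → Fqm) : Fin n → Fqm :=
  fun j => v j ^ q ^ i

/-- The Galois closure `D* = Σ_{i=0}^{m-1} D^{q^i}` of a subspace (as the span of the
union of the images of `D` under the coordinatewise `q^i`-power maps, `0 ≤ i < m`). -/
def galClosure (q m : ℕ) {Fqm : Type} [Field Fqm] (D : Submodule Fqm (Fin n → Fqm)) :
    Submodule Fqm (Fin n → Fqm) :=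
  Submodule.span Fqm (⋃ i ∈ Finset.range m, qpowMap q i '' (D : Set (Fin n → Fqm)))

/-- `D` is Galois closed if `D = D*`. -/
def GaloisClosed (q m : ℕ) {Fqm : Type} [Field Fqm] (D : Submodule Fqm (Fin n → Fqm)) : Prop :=
  galClosure q m D = D

/-- Rank weight of a subspace: `wt_R(D) = dim_{Fqm} D*`. -/
noncomputable def wtR (q m : ℕ) {Fqm : Type} [Field Fqm]
    (D : Submodule Fqm (Fin n → Fqm)) : ℕ :=
  finrank Fqm (galClosure q m D)

/-- Rank weight of a vector: `wt_R(c) = wt_R(span {c})`. -/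
noncomputable def wtRv (q m : ℕ) {Fqm : Type} [Field Fqm] (c : Fin n → Fqm) : ℕ :=
  wtR q m (Submodule.span Fqm ({c} : Set (Fin n → Fqm)))

/-- Hamming weight of a subspace: the number of coordinates where some element is nonzero. -/
noncomputable def wtH {Fqm : Type} [Field Fqm] (D : Submodule Fqm (Fin n → Fqm)) : ℕ :=
  {i : Fin n | ∃ d ∈ D, d i ≠ 0}.ncard

/-- `r`-th generalized rank weight of a linear code. -/
noncomputable def dR (q m : ℕ) {Fqm : Type} [Field Fqm]
    (C : Submodule Fqm (Fin n → Fqm)) (r : ℕ) : ℕ :=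
  sInf { dv | ∃ V : Submodule Fqm (Fin n → Fqm),
    GaloisClosed q m V ∧ r ≤ finrank Fqm ↥(C ⊓ V) ∧ dv = finrank Fqm ↥V }

/-- `r`-th generalized Hamming weight of a linear code. -/
noncomputable def dH {Fqm : Type} [Field Fqm]
    (C : Submodule Fqm (Fin n → Fqm)) (r : ℕ) : ℕ :=
  sInf { w | ∃ D : Submodule Fqm (Fin n → Fqm), D ≤ C ∧ finrank Fqm ↥D = r ∧ w = wtH D }

/-- `r`-th relative generalized rank weight of a nested code pair. -/
noncomputable def MR (q m : ℕ) {Fqm : Type} [Field Fqm]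
    (C₁ C₂ : Submodule Fqm (Fin n → Fqm)) (r : ℕ) : ℕ :=
  sInf { dv | ∃ V : Submodule Fqm (Fin n → Fqm), GaloisClosed q m V ∧
    r ≤ finrank Fqm ↥(C₁ ⊓ V) - finrank Fqm ↥(C₂ ⊓ V) ∧ dv = finrank Fqm ↥V }

/-- Minimum rank distance of an arbitrary (possibly nonlinear) code. -/
noncomputable def dRset (q m : ℕ) {Fqm : Type} [Field Fqm] (C : Set (Fin n → Fqm)) : ℕ :=
  sInf { w | ∃ c₁ ∈ C, ∃ c₂ ∈ C, c₁ ≠ c₂ ∧ w = wtRv q m (c₁ - c₂) }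

/-- The linear functional `x ↦ Σ_j x_j y_j` (dot product with `y`). -/
def dotLin {K : Type} [Field K] (y : Fin n → K) : (Fin n → K) →ₗ[K] K :=
  ∑ j, y j • LinearMap.proj j

/-- Orthogonal complement of a subspace with respect to the standard bilinear form. -/
def perp {K : Type} [Field K] (L : Submodule K (Fin n → K)) : Submodule K (Fin n → K) :=
  ⨅ y ∈ L, LinearMap.ker (dotLin y)

/-- The coordinatewise inclusion `Fq^n → Fqm^n`. -/
def embFq (Fq Fqm : Type) [Field Fq] [Field Fqm] [Algebra Fq Fqm] :
    (Fin n → Fq) →ₗ[Fq] (Fin n → Fqm) :=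
  LinearMap.pi fun j => (Algebra.linearMap Fq Fqm).comp (LinearMap.proj j)

/-- `V_L = L ⊗ Fqm`, the `Fqm`-span of `L ⊆ Fq^n` inside `Fqm^n`. -/
def VL {Fq : Type} (Fqm : Type) [Field Fq] [Field Fqm] [Algebra Fq Fqm]
    (L : Submodule Fq (Fin n → Fq)) : Submodule Fqm (Fin n → Fqm) :=
  Submodule.span Fqm (embFq Fq Fqm '' (L : Set (Fin n → Fq)))

/-- Rank-punctured code `C^L`: the image of `C` in `Fqm^n / V_{L^⊥}`. -/
noncomputable def punct {Fq Fqm : Type} [Field Fq] [Field Fqm] [Algebra Fq Fqm]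
    (L : Submodule Fq (Fin n → Fq)) (C : Submodule Fqm (Fin n → Fqm)) :
    Submodule Fqm ((Fin n → Fqm) ⧸ VL Fqm (perp L)) :=
  Submodule.map (VL Fqm (perp L)).mkQ C


theorem perp_eq_orth {K : Type} [Field K] (L : Submodule K (Fin n → K)) :
    perp L = LinearMap.BilinForm.orthogonal (Matrix.toBilin' (1 : Matrix (Fin n) (Fin n) K)) L := by
  ext x
  simp only [perp, Submodule.mem_iInf, LinearMap.mem_ker, LinearMap.BilinForm.mem_orthogonal_iff,
    dotLin, Matrix.toBilin'_apply', Matrix.one_mulVec]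
  simp [dotProduct]

theorem nondeg_one {K : Type} [Field K] :
    (Matrix.toBilin' (1 : Matrix (Fin n) (Fin n) K)).Nondegenerate :=
  LinearMap.BilinForm.nondegenerate_toBilin'_of_det_ne_zero' _ (by simp)

theorem refl_one {K : Type} [Field K] :
    (Matrix.toBilin' (1 : Matrix (Fin n) (Fin n) K)).IsRefl := by
  intro x y h
  rw [Matrix.toBilin'_apply', Matrix.one_mulVec] at *
  rwa [dotProduct_comm]

theorem finrank_perp {K : Type} [Field K] (L : Submodule K (Fin n → K)) :
    finrank K (perp L) = n - finrank K L := by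
  rw [perp_eq_orth, LinearMap.BilinForm.finrank_orthogonal nondeg_one]
  simp

theorem perp_perp {K : Type} [Field K] (L : Submodule K (Fin n → K)) :
    perp (perp L) = L := by
  rw [perp_eq_orth, perp_eq_orth]
  exact LinearMap.BilinForm.orthogonal_orthogonal nondeg_one refl_one L

section

variable {Fq Fqm : Type} [Field Fq] [Field Fqm] [Algebra Fq Fqm] [Finite Fqm]

theorem finite_base (Fq Fqm : Type) [Field Fq] [Field Fqm] [Algebra Fq Fqm] [Finite Fqm] :
    Finite Fq :=
  Finite.of_injective _ (FaithfulSMul.algebraMap_injective Fq Fqm)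

theorem add_pow_q (Fq : Type) [Field Fq] [Algebra Fq Fqm] (i : ℕ) (a b : Fqm) :
    (a + b) ^ Nat.card Fq ^ i = a ^ Nat.card Fq ^ i + b ^ Nat.card Fq ^ i := by
  have := finite_base Fq Fqm
  have := Fintype.ofFinite Fq
  have h := map_add ((FiniteField.frobeniusAlgHom Fq Fqm) ^ i) a b
  have key : ∀ x, ((FiniteField.frobeniusAlgHom Fq Fqm) ^ i) x = x ^ Nat.card Fq ^ i := by
    intro x
    rw [Nat.card_eq_fintype_card]
    induction i generalizing x with
    | zero => simp
    | succ i ih =>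
      rw [pow_succ, AlgHom.mul_apply, ih (map_add _ _ _)]
      simp [pow_succ, pow_mul, ← pow_mul, mul_comm]
  simpa only [key] using h

theorem qpow_add (Fq : Type) [Field Fq] [Algebra Fq Fqm] (i : ℕ) (a b : Fin n → Fqm) :
    qpowMap (Nat.card Fq) i (a + b) = qpowMap (Nat.card Fq) i a + qpowMap (Nat.card Fq) i b := by
  ext j
  exact add_pow_q Fq i _ _

theorem qpow_smul (q i : ℕ) (a : Fqm) (v : Fin n → Fqm) :
    qpowMap q i (a • v) = a ^ q ^ i • qpowMap q i v := by
  ext j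
  simp [qpowMap, mul_pow]

theorem qpow_qpow (q i k : ℕ) (v : Fin n → Fqm) :
    qpowMap q i (qpowMap q k v) = qpowMap q (k + i) v := by
  ext j
  simp [qpowMap, pow_add, pow_mul]

theorem qpow_zero (Fq : Type) [Field Fq] [Algebra Fq Fqm] (i : ℕ) :
    qpowMap (Nat.card Fq) i (0 : Fin n → Fqm) = 0 := by
  have := finite_base Fq Fqm
  ext j
  have : 0 < Nat.card Fq := Nat.card_pos
  simp only [qpowMap, Pi.zero_apply]
  exact zero_pow (pow_pos this i).ne'

theorem qpow_id (q : ℕ) (v : Fin n → Fqm) : qpowMap q 0 v = v := by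
  ext j
  simp [qpowMap]

theorem qpow_top (Fq : Type) [Field Fq] [Algebra Fq Fqm] (v : Fin n → Fqm) :
    qpowMap (Nat.card Fq) (finrank Fq Fqm) v = v := by
  have := finite_base Fq Fqm
  have := Fintype.ofFinite Fqm
  ext j
  simp only [qpowMap]
  rw [← Module.natCard_eq_pow_finrank, Nat.card_eq_fintype_card, FiniteField.pow_card]

theorem qpow_emb (i : ℕ) (x : Fin n → Fq) :
    qpowMap (Nat.card Fq) i (embFq Fq Fqm x) = embFq Fq Fqm x := by
  have := finite_base Fq Fqm
  have := Fintype.ofFinite Fq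
  ext j
  simp only [qpowMap, embFq, LinearMap.pi_apply, LinearMap.comp_apply, LinearMap.proj_apply,
    Algebra.linearMap_apply]
  rw [← map_pow, Nat.card_eq_fintype_card, FiniteField.pow_card_pow]

theorem qpow_VL (i : ℕ) (L : Submodule Fq (Fin n → Fq)) (v : Fin n → Fqm) (hv : v ∈ VL Fqm L) :
    qpowMap (Nat.card Fq) i v ∈ VL Fqm L := by
  unfold VL at hv
  induction hv using Submodule.span_induction with
  | mem x hx =>
    obtain ⟨y, hy, rfl⟩ := hx
    rw [qpow_emb]
    exact Submodule.subset_span ⟨y, hy, rfl⟩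
  | zero => rw [qpow_zero]; exact zero_mem _
  | add x y _ _ hx hy => rw [qpow_add]; exact add_mem hx hy
  | smul a x _ hx => rw [qpow_smul]; exact Submodule.smul_mem _ _ hx

theorem qpow_gal (i : ℕ) (D : Submodule Fqm (Fin n → Fqm)) (v : Fin n → Fqm)
    (hv : v ∈ galClosure (Nat.card Fq) (finrank Fq Fqm) D) :
    qpowMap (Nat.card Fq) i v ∈ galClosure (Nat.card Fq) (finrank Fq Fqm) D := by
  have := finite_base Fq Fqm
  induction i with
  | zero => rwa [qpow_id]
  | succ i ih =>
    rw [← qpow_qpow]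
    generalize qpowMap (Nat.card Fq) i v = v at ih
    unfold galClosure at ih
    induction ih using Submodule.span_induction with
    | mem x hx =>
      simp only [Set.mem_iUnion, Finset.mem_range] at hx
      obtain ⟨k, hk, d, hd, rfl⟩ := hx
      rw [qpow_qpow]
      apply Submodule.subset_span
      simp only [Set.mem_iUnion, Finset.mem_range]
      rcases lt_or_eq_of_le (Nat.succ_le_of_lt hk) with h | h
      · exact ⟨k + 1, h, d, hd, rfl⟩
      · refine ⟨0, by omega, d, hd, ?_⟩
        rw [show k + 1 = finrank Fq Fqm from h, qpow_top]
        exact qpow_id _ _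
    | zero => rw [qpow_zero]; exact zero_mem _
    | add x y _ _ hx hy => rw [qpow_add]; exact add_mem hx hy
    | smul a x _ hx => rw [qpow_smul]; exact Submodule.smul_mem _ _ hx

theorem finrank_VL_le (L : Submodule Fq (Fin n → Fq)) :
    finrank Fqm (VL Fqm L) ≤ finrank Fq L := by
  let b := Module.finBasis Fq L
  have h : VL Fqm L ≤ Submodule.span Fqm (Set.range fun i => embFq Fq Fqm (b i : Fin n → Fq)) := by
    unfold VL
    rw [Submodule.span_le]
    rintro _ ⟨x, hx, rfl⟩
    have h1 := b.sum_repr ⟨x, hx⟩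
    have h2 : x = ∑ i, b.repr ⟨x, hx⟩ i • (b i : Fin n → Fq) := by
      have := congrArg Subtype.val h1
      rw [AddSubmonoidClass.coe_finset_sum] at this
      exact this.symm
    rw [h2, map_sum]
    refine sum_mem fun i _ => ?_
    rw [map_smul, ← algebraMap_smul Fqm]
    exact Submodule.smul_mem _ _ (Submodule.subset_span ⟨i, rfl⟩)
  refine (Submodule.finrank_mono h).trans ?_
  refine (finrank_range_le_card _).trans ?_
  simp

theorem VL_sup (L M : Submodule Fq (Fin n → Fq)) (h : L ⊔ M = ⊤) : VL Fqm L ⊔ VL Fqm M = ⊤ := by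
  have hx : ∀ x, embFq Fq Fqm x ∈ VL Fqm L ⊔ VL Fqm M := by
    intro x
    have : x ∈ L ⊔ M := h ▸ Submodule.mem_top
    obtain ⟨a, ha, b, hb, rfl⟩ := Submodule.mem_sup.1 this
    rw [map_add]
    exact Submodule.add_mem_sup (Submodule.subset_span ⟨a, ha, rfl⟩)
      (Submodule.subset_span ⟨b, hb, rfl⟩)
  rw [eq_top_iff]
  intro v _
  have : v = ∑ j, v j • embFq Fq Fqm (Pi.single j 1) := by
    ext k
    simp [embFq, Pi.single_apply, apply_ite]
  rw [this]
  exact sum_mem fun j _ => Submodule.smul_mem _ _ (hx _)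

theorem VL_compl (L M : Submodule Fq (Fin n → Fq)) (h : IsCompl L M) :
    IsCompl (VL Fqm L) (VL Fqm M) ∧ finrank Fqm (VL Fqm M) = finrank Fq M := by
  have h1 := VL_sup (Fqm := Fqm) L M h.sup_eq_top
  have h2 := Submodule.finrank_sup_add_finrank_inf_eq (VL Fqm L) (VL Fqm M)
  have h3 := Submodule.finrank_add_eq_of_isCompl h
  have h4 := finrank_VL_le (Fqm := Fqm) L
  have h5 := finrank_VL_le (Fqm := Fqm) M
  rw [h1] at h2
  simp only [finrank_top, Module.finrank_fin_fun] at h2 h3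
  refine ⟨⟨?_, codisjoint_iff.2 h1⟩, by omega⟩
  rw [disjoint_iff, ← Submodule.finrank_eq_zero (R := Fqm)]
  omega

/-- Galois descent: a Galois closed space is spanned by its rational points. -/
theorem descent (D : Submodule Fqm (Fin n → Fqm)) :
    ∃ M : Submodule Fq (Fin n → Fq),
      VL Fqm M = galClosure (Nat.card Fq) (finrank Fq Fqm) D := by
  have := finite_base Fq Fqm
  set G := galClosure (Nat.card Fq) (finrank Fq Fqm) D with hG
  refine ⟨(G.restrictScalars Fq).comap (embFq Fq Fqm), le_antisymm ?_ ?_⟩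
  · unfold VL
    rw [Submodule.span_le]
    rintro _ ⟨x, hx, rfl⟩
    exact hx
  · intro v hv
    let b := Module.finBasis Fq Fqm
    have key : v = ∑ i, b.traceDual i • embFq Fq Fqm (fun j => Algebra.trace Fq Fqm (v j * b i)) := by
      ext j
      conv_lhs => rw [← b.traceDual.sum_repr (v j)]
      simp [embFq, Algebra.smul_def, mul_comm, Algebra.traceForm_apply]
    rw [key]
    refine sum_mem fun i _ => Submodule.smul_mem _ _ (Submodule.subset_span ⟨_, ?_, rfl⟩)
    change embFq Fq Fqm _ ∈ G
    have h2 : embFq Fq Fqm (fun j => Algebra.trace Fq Fqm (v j * b i)) =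
        ∑ k ∈ Finset.range (finrank Fq Fqm), qpowMap (Nat.card Fq) k (b i • v) := by
      ext j
      simp [embFq, FiniteField.algebraMap_trace_eq_sum_pow, qpowMap, mul_comm]
    rw [h2]
    exact sum_mem fun k _ => qpow_gal k D _ (Submodule.smul_mem _ _ hv)

theorem comm_pi (L' M : Submodule Fq (Fin n → Fq)) (π : (Fin n → Fqm) →ₗ[Fqm] (Fin n → Fqm))
    (hπ : π.comp π = π) (hr : LinearMap.range π = VL Fqm L') (hk : LinearMap.ker π = VL Fqm M)
    (i : ℕ) (v : Fin n → Fqm) :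
    π (qpowMap (Nat.card Fq) i v) = qpowMap (Nat.card Fq) i (π v) := by
  have hpp : ∀ x, π (π x) = π x := fun x => LinearMap.congr_fun hπ x
  have h1 : v = π v + (v - π v) := by abel
  have h2 : v - π v ∈ VL Fqm M := by
    rw [← hk, LinearMap.mem_ker, map_sub, hpp, sub_self]
  have h3 : qpowMap (Nat.card Fq) i (π v) ∈ LinearMap.range π := by
    rw [hr]; apply qpow_VL; rw [← hr]; exact ⟨v, rfl⟩
  have h4 : qpowMap (Nat.card Fq) i (v - π v) ∈ LinearMap.ker π := by
    rw [hk]; exact qpow_VL _ _ _ h2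
  obtain ⟨w, hw⟩ := h3
  conv_lhs => rw [h1, qpow_add, map_add, LinearMap.mem_ker.1 h4, add_zero, ← hw, hpp, hw]

theorem gal_map (L' M : Submodule Fq (Fin n → Fq)) (π : (Fin n → Fqm) →ₗ[Fqm] (Fin n → Fqm))
    (hπ : π.comp π = π) (hr : LinearMap.range π = VL Fqm L') (hk : LinearMap.ker π = VL Fqm M)
    (m : ℕ) (D : Submodule Fqm (Fin n → Fqm)) :
    galClosure (Nat.card Fq) m (D.map π) = (galClosure (Nat.card Fq) m D).map π := by
  unfold galClosure
  rw [Submodule.map_span, Set.image_iUnion₂]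
  congr 1
  refine Set.iUnion₂_congr fun i _ => ?_
  rw [Submodule.map_coe, Set.image_image, Set.image_image]
  exact Set.image_congr fun x _ => (comm_pi L' M π hπ hr hk i x).symm

theorem wt_pi (L' M : Submodule Fq (Fin n → Fq)) (π : (Fin n → Fqm) →ₗ[Fqm] (Fin n → Fqm))
    (hπ : π.comp π = π) (hr : LinearMap.range π = VL Fqm L') (hk : LinearMap.ker π = VL Fqm M)
    (m : ℕ) (c : Fin n → Fqm) :
    wtRv (Nat.card Fq) m (π c) + finrank Fqm
      (VL Fqm M ⊓ galClosure (Nat.card Fq) m (Submodule.span Fqm {c}) : Submodule Fqm _) =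
      wtRv (Nat.card Fq) m c := by
  unfold wtRv wtR
  have : Submodule.span Fqm {π c} = (Submodule.span Fqm {c}).map π := by
    rw [Submodule.map_span, Set.image_singleton]
  rw [this, gal_map L' M π hπ hr hk]
  set G := galClosure (Nat.card Fq) m (Submodule.span Fqm {c})
  have h := LinearMap.finrank_range_add_finrank_ker (π.domRestrict G)
  rw [← h, LinearMap.range_domRestrict, LinearMap.ker_domRestrict, ← hk]
  congr 1
  rw [← Submodule.finrank_map_subtype_eq G, Submodule.map_comap_subtype, inf_comm]

end

theorem exists_sub {K V : Type} [Field K] [AddCommGroup V] [Module K V] [FiniteDimensional K V]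
    (M : Submodule K V) (r : ℕ) (h : r ≤ finrank K M) : ∃ N ≤ M, finrank K N = r := by
  obtain ⟨s, hs, hli⟩ := exists_finset_linearIndependent_of_le_finrank h
  refine ⟨(Submodule.span K (s : Set M)).map M.subtype, Submodule.map_subtype_le _ _, ?_⟩
  rw [Submodule.finrank_map_subtype_eq, finrank_span_finset_eq_card hli, hs]

/-- rank-puncturing an arbitrary code with `ρ < d_R(C)` decreases the
minimum rank distance by at most `ρ`, and by exactly `ρ` for a suitable choice. -/
theorem stmt17 (q m n ρ : ℕ) (Fq Fqm : Type) [Field Fq] [Field Fqm] [Algebra Fq Fqm]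
    [Finite Fqm] (hq : Nat.card Fq = q) (hm : finrank Fq Fqm = m)
    (C : Set (Fin n → Fqm)) (hC : C.Nontrivial) (hρ : ρ < dRset q m C) :
    (∀ L L' : Submodule Fq (Fin n → Fq), n - ρ ≤ finrank Fq L → IsCompl L' (perp L) →
      ∀ π : (Fin n → Fqm) →ₗ[Fqm] (Fin n → Fqm), π.comp π = π →
        LinearMap.range π = VL Fqm L' → LinearMap.ker π = VL Fqm (perp L) →
        ∀ c₁ ∈ C, ∀ c₂ ∈ C, c₁ ≠ c₂ →
          dRset q m C - ρ ≤ wtRv q m (π c₁ - π c₂)) ∧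
    (∃ (L L' : Submodule Fq (Fin n → Fq)) (π : (Fin n → Fqm) →ₗ[Fqm] (Fin n → Fqm)),
      finrank Fq L = n - ρ ∧ IsCompl L' (perp L) ∧ π.comp π = π ∧
      LinearMap.range π = VL Fqm L' ∧ LinearMap.ker π = VL Fqm (perp L) ∧
      sInf { w | ∃ c₁ ∈ C, ∃ c₂ ∈ C, c₁ ≠ c₂ ∧ w = wtRv q m (π c₁ - π c₂) }
        = dRset q m C - ρ) := by
  subst hq hm
  have part1 : ∀ L L' : Submodule Fq (Fin n → Fq), n - ρ ≤ finrank Fq L → IsCompl L' (perp L) →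
      ∀ π : (Fin n → Fqm) →ₗ[Fqm] (Fin n → Fqm), π.comp π = π →
        LinearMap.range π = VL Fqm L' → LinearMap.ker π = VL Fqm (perp L) →
        ∀ c₁ ∈ C, ∀ c₂ ∈ C, c₁ ≠ c₂ →
          dRset (Nat.card Fq) (finrank Fq Fqm) C - ρ ≤
            wtRv (Nat.card Fq) (finrank Fq Fqm) (π c₁ - π c₂) := by
    intro L L' hL _ π hπ hr hk c₁ h₁ c₂ h₂ hne
    have h := wt_pi L' (perp L) π hπ hr hk (finrank Fq Fqm) (c₁ - c₂)
    rw [map_sub] at h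
    have hd : dRset (Nat.card Fq) (finrank Fq Fqm) C ≤
        wtRv (Nat.card Fq) (finrank Fq Fqm) (c₁ - c₂) :=
      Nat.sInf_le ⟨c₁, h₁, c₂, h₂, hne, rfl⟩
    have h3 := Submodule.finrank_mono (inf_le_left : VL Fqm (perp L) ⊓
      galClosure (Nat.card Fq) (finrank Fq Fqm) (Submodule.span Fqm {c₁ - c₂}) ≤ _)
    have h4 := finrank_VL_le (Fqm := Fqm) (perp L)
    rw [finrank_perp] at h4
    omega
  refine ⟨part1, ?_⟩
  have hmem : dRset (Nat.card Fq) (finrank Fq Fqm) C ∈ { w | ∃ c₁ ∈ C, ∃ c₂ ∈ C, c₁ ≠ c₂ ∧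
      w = wtRv (Nat.card Fq) (finrank Fq Fqm) (c₁ - c₂) } := by
    apply Nat.sInf_mem
    obtain ⟨x, hx, y, hy, hxy⟩ := hC
    exact ⟨_, x, hx, y, hy, hxy, rfl⟩
  obtain ⟨c₁, h₁, c₂, h₂, hne, hd⟩ := hmem
  obtain ⟨M₀, hM₀⟩ := descent (Fq := Fq) (Submodule.span Fqm {c₁ - c₂})
  have hle : ρ ≤ finrank Fq M₀ := by
    have := finrank_VL_le (Fqm := Fqm) M₀
    rw [hM₀] at this
    change wtRv _ _ _ ≤ _ at this
    omega
  obtain ⟨M, hMM, hM⟩ := exists_sub M₀ ρ hle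
  obtain ⟨L', hL'⟩ := Submodule.exists_isCompl M
  obtain ⟨hc, hfr⟩ := VL_compl (Fqm := Fqm) L' M hL'.symm
  have hpi1 := LinearMap.ext fun x => LinearMap.congr_fun (Submodule.isIdempotentElem_projection hc) x
  have hr := Submodule.range_projection hc
  have hk := Submodule.ker_projection hc
  have hdim : finrank Fq (perp M) = n - ρ := by rw [finrank_perp, hM]
  refine ⟨perp M, L', Submodule.projection _ _ hc, hdim, ?_, hpi1, hr, ?_, ?_⟩
  · rw [perp_perp]; exact hL'.symm
  · rw [perp_perp]; exact hk
  · have hwt := wt_pi L' M _ hpi1 hr hk (finrank Fq Fqm) (c₁ - c₂)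
    have hVM : VL Fqm M ≤ VL Fqm M₀ := Submodule.span_mono (Set.image_mono hMM)
    rw [← hM₀, inf_eq_left.2 hVM, hfr, hM, ← hd, map_sub] at hwt
    apply le_antisymm
    · apply Nat.sInf_le
      exact ⟨c₁, h₁, c₂, h₂, hne, by omega⟩
    · refine le_csInf ⟨_, c₁, h₁, c₂, h₂, hne, rfl⟩ ?_
      rintro w ⟨a, ha, b, hb, hab, rfl⟩
      exact part1 (perp M) L' hdim.ge (by rw [perp_perp]; exact hL'.symm) _ hpi1 hr
        (by rw [perp_perp]; exact hk) a ha b hb hab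

end RankPaper
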